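/- Let θ : ℝⁿ → [−∞,+∞] be symmetric, let the spectral function g = θ∘λ be lower semicontinuous, let X ∈ Sⁿ and Y ∈ ∂g(X), and let U ∈ Oⁿ(X) and y ∈ ∂θ(λ(X)) satisfy Y = U·Diag(y)·Uᵀ; let v = Qy for a block-diagonal permutation matrix Q (blocks indexed by α₁,…,α_r) chosen so that each block v_{α_m} has nonincreasing entries. Assume that either (a) g is subdifferentially regular at X, or (b) θ is locally Lipschitz continuous at λ(X) relative to its domain and Y ∈ ∂̂g(X). Then H ∈ C_g(X,Y) if and only if λ'(X;H) ∈ C_θ(λ(X),v) and, for every m = 1,…,r, the matrices Diag(y_{α_m}) and U_{α_m}ᵀ·H·U_{α_m} have a simultaneous ordered spectral decomposition. -/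

import Mathlib

open Filter Topology Matrix

noncomputable section

namespace SpecPaper

/-! ## Generic variational analysis definitions over a topological real vector space -/

variable {E : Type*}

section Generic

variable [AddCommGroup E] [Module ℝ E] [TopologicalSpace E]

/-- `f x` is finite (neither `+∞` nor `-∞`). -/
def IsFiniteAt (f : E → EReal) (x : E) : Prop :=
  f x ≠ ⊤ ∧ f x ≠ ⊥

/-- The norm induced by a given inner product. -/
noncomputable def nrm (ip : E → E → ℝ) (x : E) : ℝ :=
  Real.sqrt (ip x x)

/-- The subderivative `df(x)(w)`. -/
noncomputable def subderiv (f : E → EReal) (x w : E) : EReal :=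
  Filter.liminf (fun p : ℝ × E => (((p.1)⁻¹ : ℝ) : EReal) * (f (x + p.1 • p.2) - f x))
    ((nhdsWithin (0 : ℝ) (Set.Ioi 0)) ×ˢ nhds w)

/-- The second-order difference quotient `Δ²ₜ f(x,v)(w)`. -/
noncomputable def sdq2 (ip : E → E → ℝ) (f : E → EReal) (x v : E) (t : ℝ) (w : E) : EReal :=
  (((2 / t ^ 2) : ℝ) : EReal) * (f (x + t • w) - f x - ((t * ip v w : ℝ) : EReal))

/-- The second subderivative `d²f(x,v)(w)`. -/
noncomputable def subderiv2 (ip : E → E → ℝ) (f : E → EReal) (x v w : E) : EReal :=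
  Filter.liminf (fun p : ℝ × E => sdq2 ip f x v p.1 p.2)
    ((nhdsWithin (0 : ℝ) (Set.Ioi 0)) ×ˢ nhds w)

/-- Twice epi-differentiability of `f` at `x` for `v`. -/
def TwiceEpiDiff (ip : E → E → ℝ) (f : E → EReal) (x v : E) : Prop :=
  IsFiniteAt f x ∧
    ∀ t : ℕ → ℝ, (∀ k, 0 < t k) → Tendsto t atTop (nhds 0) →
      ∀ w : E, ∃ ws : ℕ → E, Tendsto ws atTop (nhds w) ∧
        Tendsto (fun k => sdq2 ip f x v (t k) (ws k)) atTop (nhds (subderiv2 ip f x v w))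

/-- `v` is a regular subgradient of `f` at `x`. -/
def RegSubgrad (ip : E → E → ℝ) (f : E → EReal) (x v : E) : Prop :=
  IsFiniteAt f x ∧
    (0 : EReal) ≤ Filter.liminf
      (fun y : E =>
        (((nrm ip (y - x))⁻¹ : ℝ) : EReal) * (f y - f x - ((ip v (y - x) : ℝ) : EReal)))
      (nhdsWithin x {x}ᶜ)

/-- `v` is a (limiting) subgradient of `f` at `x`. -/
def LimSubgrad (ip : E → E → ℝ) (f : E → EReal) (x v : E) : Prop :=
  ∃ xs vs : ℕ → E, (∀ k, RegSubgrad ip f (xs k) (vs k)) ∧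
    Tendsto xs atTop (nhds x) ∧ Tendsto vs atTop (nhds v) ∧
    Tendsto (fun k => f (xs k)) atTop (nhds (f x))

/-- The tangent cone to `C` at `x`. -/
def tangentCone (C : Set E) (x : E) : Set E :=
  {w | ∃ (t : ℕ → ℝ) (ws : ℕ → E), (∀ k, 0 < t k) ∧ Tendsto t atTop (nhds 0) ∧
    Tendsto ws atTop (nhds w) ∧ ∀ k, x + t k • ws k ∈ C}

/-- The regular normal cone to `C` at `x`. -/
def regNormalCone (ip : E → E → ℝ) (C : Set E) (x : E) : Set E :=
  {v | ∀ w ∈ tangentCone C x, ip v w ≤ 0}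

/-- The limiting normal cone to `C` at `x`. -/
def limNormalCone (ip : E → E → ℝ) (C : Set E) (x : E) : Set E :=
  {v | ∃ xs vs : ℕ → E, (∀ k, xs k ∈ C) ∧ (∀ k, vs k ∈ regNormalCone ip C (xs k)) ∧
    Tendsto xs atTop (nhds x) ∧ Tendsto vs atTop (nhds v)}

/-- The critical cone `C_f(x,v)`. -/
def criticalCone (ip : E → E → ℝ) (f : E → EReal) (x v : E) : Set E :=
  {w | subderiv f x w = ((ip v w : ℝ) : EReal)}

/-- `f` is locally Lipschitz continuous at `x` relative to its domain. -/
def LocLipAtRelDom (ip : E → E → ℝ) (f : E → EReal) (x : E) : Prop :=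
  IsFiniteAt f x ∧
    ∃ V ∈ nhds x, ∃ ℓ : ℝ, 0 ≤ ℓ ∧
      ∀ a ∈ V, ∀ b ∈ V, f a ≠ ⊤ → f b ≠ ⊤ →
        f a ≠ ⊥ ∧ f b ≠ ⊥ ∧ |(f a).toReal - (f b).toReal| ≤ ℓ * nrm ip (a - b)

/-- `f` is locally Lipschitz continuous relative to its domain. -/
def LocLipRelDom (ip : E → E → ℝ) (f : E → EReal) : Prop :=
  ∀ x : E, f x ≠ ⊤ → LocLipAtRelDom ip f x

/-- `v` is a proximal subgradient of `f` at `x`. -/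
def ProxSubgrad (ip : E → E → ℝ) (f : E → EReal) (x v : E) : Prop :=
  IsFiniteAt f x ∧
    ∃ r > (0 : ℝ), ∃ ε > (0 : ℝ), ∀ x' : E, nrm ip (x' - x) ≤ ε →
      f x + ((ip v (x' - x) - r / 2 * ip (x' - x) (x' - x) : ℝ) : EReal) ≤ f x'

/-- `f` is prox-regular at `x` for `v`. -/
def ProxRegularAtFor (ip : E → E → ℝ) (f : E → EReal) (x v : E) : Prop :=
  IsFiniteAt f x ∧
    (∃ δ > (0 : ℝ), LowerSemicontinuousOn f {x' | nrm ip (x' - x) < δ}) ∧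
    ∃ ε > (0 : ℝ), ∃ r : ℝ, 0 ≤ r ∧
      ∀ x₁ v₁ : E, LimSubgrad ip f x₁ v₁ → nrm ip (x₁ - x) < ε → nrm ip (v₁ - v) < ε →
        f x₁ < f x + (ε : EReal) →
        ∀ x' : E, nrm ip (x' - x) < ε →
          f x₁ + ((ip v₁ (x' - x₁) - r / 2 * ip (x' - x₁) (x' - x₁) : ℝ) : EReal) ≤ f x'

/-- `f` is prox-regular at `x` (for every subgradient). -/
def ProxRegularAt (ip : E → E → ℝ) (f : E → EReal) (x : E) : Prop :=
  ∀ v : E, LimSubgrad ip f x v → ProxRegularAtFor ip f x v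

/-- `f` is subdifferentially continuous at `x`. -/
def SubdiffContAt (ip : E → E → ℝ) (f : E → EReal) (x : E) : Prop :=
  ∀ v : E, LimSubgrad ip f x v →
    ∀ xs vs : ℕ → E, (∀ k, LimSubgrad ip f (xs k) (vs k)) →
      Tendsto xs atTop (nhds x) → Tendsto vs atTop (nhds v) →
      Tendsto (fun k => f (xs k)) atTop (nhds (f x))

/-- `f` is prox-bounded. -/
def ProxBounded (ip : E → E → ℝ) (f : E → EReal) : Prop :=
  ∃ α c : ℝ, ∀ x : E, (c : EReal) ≤ f x + ((α * ip x x : ℝ) : EReal)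

/-- The proximal mapping (as a set of minimizers). -/
def proxSet (ip : E → E → ℝ) (f : E → EReal) (γ : ℝ) (x : E) : Set E :=
  {w | ∀ w' : E,
    f w + ((1 / (2 * γ) * ip (w - x) (w - x) : ℝ) : EReal) ≤
      f w' + ((1 / (2 * γ) * ip (w' - x) (w' - x) : ℝ) : EReal)}

/-- The proximal map of `f` with parameter `γ` is single-valued around `z` and the resulting
map is directionally differentiable at `z`. -/
def ProxSingleDirDiff (ip : E → E → ℝ) (f : E → EReal) (γ : ℝ) (z : E) : Prop :=
  ∃ V ∈ nhds z, ∃ P : E → E, (∀ u ∈ V, proxSet ip f γ u = {P u}) ∧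
    ∀ h : E, ∃ L : E,
      Tendsto (fun t : ℝ => t⁻¹ • (P (z + t • h) - P z)) (nhdsWithin 0 (Set.Ioi 0)) (nhds L)

/-- The parabolic difference quotient. -/
noncomputable def parabQuot (f : E → EReal) (x w : E) (t : ℝ) (z : E) : EReal :=
  (((2 / t ^ 2) : ℝ) : EReal) *
    (f (x + t • w + (t ^ 2 / 2) • z) - f x - ((t * (subderiv f x w).toReal : ℝ) : EReal))

/-- The parabolic subderivative `d²f(x)(w | z)`. -/
noncomputable def parabSubderiv (f : E → EReal) (x w z : E) : EReal :=
  Filter.liminf (fun p : ℝ × E => parabQuot f x w p.1 p.2)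
    ((nhdsWithin (0 : ℝ) (Set.Ioi 0)) ×ˢ nhds z)

/-- `f` is parabolically epi-differentiable at `x` for `w`. -/
def ParabEpiDiff (f : E → EReal) (x w : E) : Prop :=
  (∃ z : E, parabSubderiv f x w z < ⊤) ∧
    ∀ t : ℕ → ℝ, (∀ k, 0 < t k) → Tendsto t atTop (nhds 0) →
      ∀ z : E, ∃ zs : ℕ → E, Tendsto zs atTop (nhds z) ∧
        Tendsto (fun k => parabQuot f x w (t k) (zs k)) atTop (nhds (parabSubderiv f x w z))

/-- `φ` is a generalized quadratic form: its domain is a linear subspace and on the domain it is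
given by a symmetric linear operator. -/
def IsGQF (ip : E → E → ℝ) (φ : E → EReal) : Prop :=
  (φ 0 ≠ ⊤) ∧
  (∀ x y : E, φ x ≠ ⊤ → φ y ≠ ⊤ → φ (x + y) ≠ ⊤) ∧
  (∀ (c : ℝ) (x : E), φ x ≠ ⊤ → φ (c • x) ≠ ⊤) ∧
  ∃ L : E → E,
    (∀ x y : E, φ x ≠ ⊤ → φ y ≠ ⊤ → L (x + y) = L x + L y) ∧
    (∀ (c : ℝ) (x : E), φ x ≠ ⊤ → L (c • x) = c • L x) ∧
    (∀ x y : E, φ x ≠ ⊤ → φ y ≠ ⊤ → ip (L x) y = ip x (L y)) ∧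
    (∀ x : E, φ x ≠ ⊤ → φ x = ((ip (L x) x : ℝ) : EReal))

/-- `f` is generalized twice differentiable at `x` for `v`. -/
def GenTwiceDiff (ip : E → E → ℝ) (f : E → EReal) (x v : E) : Prop :=
  TwiceEpiDiff ip f x v ∧ IsGQF ip (subderiv2 ip f x v)

/-- Proto-differentiability of a set-valued map `F` at `x` for `y ∈ F x`. -/
def ProtoDiff (F : E → Set E) (x y : E) : Prop :=
  ∀ w η : E, (w, η) ∈ tangentCone {p : E × E | p.2 ∈ F p.1} (x, y) →
    ∀ t : ℕ → ℝ, (∀ k, 0 < t k) → Tendsto t atTop (nhds 0) →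
      ∃ ws ηs : ℕ → E, Tendsto ws atTop (nhds w) ∧ Tendsto ηs atTop (nhds η) ∧
        ∀ k, y + t k • ηs k ∈ F (x + t k • ws k)

/-- Relative interior of a set (interior relative to its affine hull). -/
def relInterior (C : Set E) : Set E :=
  {y | y ∈ C ∧ ∃ V ∈ nhds y, ∀ z ∈ V, z ∈ affineSpan ℝ C → z ∈ C}

/-- A polyhedral set: the intersection of finitely many closed half-spaces. -/
def IsPolyhedral (ip : E → E → ℝ) (C : Set E) : Prop :=
  ∃ (k : ℕ) (a : Fin k → E) (b : Fin k → ℝ), C = {x | ∀ j : Fin k, ip (a j) x ≤ b j}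

/-- The subdifferential of a convex function. -/
def convexSubdiff (ip : E → E → ℝ) (f : E → EReal) (x : E) : Set E :=
  {v | ∀ z : E, f x + ((ip v (z - x) : ℝ) : EReal) ≤ f z}

/-- The natural inner product on `E × ℝ`. -/
def ipProd (ip : E → E → ℝ) : E × ℝ → E × ℝ → ℝ :=
  fun p q => ip p.1 q.1 + p.2 * q.2

/-- The epigraph of `f`. -/
def epiSet (f : E → EReal) : Set (E × ℝ) :=
  {p | f p.1 ≤ (p.2 : EReal)}

/-- `f` is subdifferentially regular at `x`. -/
def SubdiffRegularAt (ip : E → E → ℝ) (f : E → EReal) (x : E) : Prop :=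
  IsFiniteAt f x ∧
    regNormalCone (ipProd ip) (epiSet f) (x, (f x).toReal) =
      limNormalCone (ipProd ip) (epiSet f) (x, (f x).toReal)

/-! Real-valued versions: semidifferentiability, gradients. -/

/-- `f` is semidifferentiable at `x`. -/
def SemiDiffAt (f : E → ℝ) (x : E) : Prop :=
  ∀ w : E, ∃ d : ℝ,
    Tendsto (fun p : ℝ × E => (p.1)⁻¹ * (f (x + p.1 • p.2) - f x))
      ((nhdsWithin (0 : ℝ) (Set.Ioi 0)) ×ˢ nhds w) (nhds d)

/-- The (real value of the) subderivative of a real-valued function. -/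
noncomputable def dReal (f : E → ℝ) (x w : E) : ℝ :=
  (subderiv (fun y => ((f y : ℝ) : EReal)) x w).toReal

/-- The second-order difference quotient built from the subderivative. -/
noncomputable def sdq2R (f : E → ℝ) (x : E) (t : ℝ) (w : E) : ℝ :=
  (2 / t ^ 2) * (f (x + t • w) - f x - t * dReal f x w)

/-- `f` is twice semidifferentiable at `x`. -/
def TwiceSemiDiffAt (f : E → ℝ) (x : E) : Prop :=
  SemiDiffAt f x ∧
    ∀ w : E, ∃ d : ℝ,
      Tendsto (fun p : ℝ × E => sdq2R f x p.1 p.2)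
        ((nhdsWithin (0 : ℝ) (Set.Ioi 0)) ×ˢ nhds w) (nhds d)

/-- The second semiderivative `d²f(x)(w)` (the liminf; it is the full limit whenever `f` is
twice semidifferentiable at `x`). -/
noncomputable def secondSemiDeriv (f : E → ℝ) (x w : E) : EReal :=
  Filter.liminf (fun p : ℝ × E => ((sdq2R f x p.1 p.2 : ℝ) : EReal))
    ((nhdsWithin (0 : ℝ) (Set.Ioi 0)) ×ˢ nhds w)

/-- `f` is (Fréchet) differentiable at `x` with gradient `g` (w.r.t. inner product `ip`). -/
def HasGradAt (ip : E → E → ℝ) (f : E → ℝ) (x g : E) : Prop :=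
  Tendsto (fun y : E => (nrm ip (y - x))⁻¹ * (f y - f x - ip g (y - x)))
    (nhdsWithin x {x}ᶜ) (nhds 0)

/-- `f` is locally Lipschitz continuous around `x`. -/
def LocLipAt (ip : E → E → ℝ) (f : E → ℝ) (x : E) : Prop :=
  ∃ V ∈ nhds x, ∃ ℓ : ℝ, 0 ≤ ℓ ∧ ∀ a ∈ V, ∀ b ∈ V, |f a - f b| ≤ ℓ * nrm ip (a - b)

/-- `f` is twice differentiable at `x` with gradient map `G` near `x` and second derivative
(the derivative of `G` at `x`) given by the linear map `Dxx`. -/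
def HasSecondDerivAt (ip : E → E → ℝ) (f : E → EReal) (x : E) (G : E → E) (Dxx : E → E) :
    Prop :=
  ∃ V ∈ nhds x, ∃ fr : E → ℝ,
    (∀ z ∈ V, f z = ((fr z : ℝ) : EReal)) ∧
    (∀ z ∈ V, HasGradAt ip fr z (G z)) ∧
    IsLinearMap ℝ Dxx ∧
    Tendsto (fun z : E => (nrm ip (z - x))⁻¹ • (G z - G x - Dxx (z - x)))
      (nhdsWithin x {x}ᶜ) (nhds 0)

/-- `f` is twice differentiable at `x`. -/
def TwiceDiffAt (ip : E → E → ℝ) (f : E → EReal) (x : E) : Prop :=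
  ∃ G Dxx : E → E, HasSecondDerivAt ip f x G Dxx

end Generic

/-! ## Eigenvalues and spectral machinery -/

open scoped Classical in
/-- The eigenvalues of a real symmetric matrix, arranged in nonincreasing order
(junk value `0` if the matrix is not symmetric). -/
noncomputable def eigval {n : ℕ} (X : Matrix (Fin n) (Fin n) ℝ) : Fin n → ℝ :=
  if h : X.IsHermitian then
    fun i => h.eigenvalues (Tuple.sort (fun j => -h.eigenvalues j) i)
  else 0

/-- `Oⁿ(X)`: orthogonal matrices realizing the ordered spectral decomposition of `X`. -/
def eigOrth {n : ℕ} (X : Matrix (Fin n) (Fin n) ℝ) : Set (Matrix (Fin n) (Fin n) ℝ) :=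
  {U | U * Uᵀ = 1 ∧ X = U * Matrix.diagonal (eigval X) * Uᵀ}

open scoped Classical in
/-- The block `α_m` of indices `j` whose eigenvalue `λ_j(X)` equals `λ_i(X)`. -/
noncomputable def blockSet {n : ℕ} (X : Matrix (Fin n) (Fin n) ℝ) (i : Fin n) :
    Finset (Fin n) :=
  Finset.univ.filter fun j => eigval X j = eigval X i

lemma mem_blockSet_self {n : ℕ} (X : Matrix (Fin n) (Fin n) ℝ) (i : Fin n) :
    i ∈ blockSet X i := by
  simp [blockSet]

/-- The increasing enumeration of the block of `i`. -/
noncomputable def blockEmb {n : ℕ} (X : Matrix (Fin n) (Fin n) ℝ) (i : Fin n) :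
    Fin (blockSet X i).card → Fin n :=
  fun a => ((blockSet X i).orderIsoOfFin rfl a : Fin n)

/-- The position of `i` inside its own block. -/
noncomputable def blockIdx {n : ℕ} (X : Matrix (Fin n) (Fin n) ℝ) (i : Fin n) :
    Fin (blockSet X i).card :=
  ((blockSet X i).orderIsoOfFin rfl).symm ⟨i, mem_blockSet_self X i⟩

/-- The principal submatrix of `M` corresponding to the block of `i` (for `X`). -/
noncomputable def blockMat {n : ℕ} (X M : Matrix (Fin n) (Fin n) ℝ) (i : Fin n) :
    Matrix (Fin (blockSet X i).card) (Fin (blockSet X i).card) ℝ :=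
  Matrix.of fun a b => M (blockEmb X i a) (blockEmb X i b)

/-- The directional derivative `λ'(X;H)` of the ordered eigenvalue map, computed through
`U ∈ Oⁿ(X)`: blockwise ordered eigenvalues of `U_{α_m}ᵀ H U_{α_m}`. -/
noncomputable def lambdaDir {n : ℕ} (X U H : Matrix (Fin n) (Fin n) ℝ) : Fin n → ℝ :=
  fun i => eigval (blockMat X (Uᵀ * H * U) i) (blockIdx X i)

open scoped Classical in
/-- The Moore–Penrose pseudoinverse of a square real matrix, characterized by the four
Penrose equations. -/
noncomputable def pinv {n : ℕ} (A : Matrix (Fin n) (Fin n) ℝ) :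
    Matrix (Fin n) (Fin n) ℝ :=
  if h : ∃ B : Matrix (Fin n) (Fin n) ℝ,
      A * B * A = A ∧ B * A * B = B ∧ (A * B)ᵀ = A * B ∧ (B * A)ᵀ = B * A
  then h.choose else 0

/-- The curvature term `2 ∑ₘ ⟨Diag(y)_{αₘαₘ}, U_{αₘ}ᵀ H (μₘ I - X)† H U_{αₘ}⟩`, written as a
single sum over all indices. -/
noncomputable def curvTerm {n : ℕ} (X U H : Matrix (Fin n) (Fin n) ℝ) (y : Fin n → ℝ) : ℝ :=
  2 * ∑ i : Fin n, y i *
    (Uᵀ * (H * pinv (eigval X i • (1 : Matrix (Fin n) (Fin n) ℝ) - X) * H) * U) i i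

/-- Two symmetric matrices admit a simultaneous ordered spectral decomposition. -/
def simOrdSpec {k : ℕ} (A B : Matrix (Fin k) (Fin k) ℝ) : Prop :=
  ∃ P : Matrix (Fin k) (Fin k) ℝ, P * Pᵀ = 1 ∧
    A = P * Matrix.diagonal (eigval A) * Pᵀ ∧
    B = P * Matrix.diagonal (eigval B) * Pᵀ

/-- The subspace of symmetric `n × n` real matrices. -/
def symSubmodule (n : ℕ) : Submodule ℝ (Matrix (Fin n) (Fin n) ℝ) where
  carrier := {A | A.IsSymm}
  add_mem' := by
    intro a b ha hb
    simp only [Set.mem_setOf_eq, Matrix.IsSymm] at *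
    rw [Matrix.transpose_add, ha, hb]
  zero_mem' := by
    simp only [Set.mem_setOf_eq, Matrix.IsSymm, Matrix.transpose_zero]
  smul_mem' := by
    intro c a ha
    simp only [Set.mem_setOf_eq, Matrix.IsSymm] at *
    rw [Matrix.transpose_smul, ha]

/-- The space `Sⁿ` of symmetric `n × n` real matrices. -/
abbrev Sym (n : ℕ) : Type := ↥(symSubmodule n)

/-- The trace inner product `⟨A, B⟩ = tr(AB)` on `Sⁿ`. -/
noncomputable def ipM {n : ℕ} (A B : Sym n) : ℝ :=
  ((A : Matrix (Fin n) (Fin n) ℝ) * (B : Matrix (Fin n) (Fin n) ℝ)).trace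

/-- The Euclidean inner product on `ℝⁿ`. -/
def ipV {n : ℕ} (v w : Fin n → ℝ) : ℝ :=
  ∑ i, v i * w i

/-- The spectral function `g = θ ∘ λ` on `Sⁿ`. -/
noncomputable def specFn {n : ℕ} (θ : (Fin n → ℝ) → EReal) : Sym n → EReal :=
  fun A => θ (eigval (A : Matrix (Fin n) (Fin n) ℝ))

/-- A function on `ℝⁿ` is symmetric (permutation invariant). -/
def SymmetricFn {n : ℕ} {α : Type*} (θ : (Fin n → ℝ) → α) : Prop :=
  ∀ (x : Fin n → ℝ) (σ : Equiv.Perm (Fin n)), θ (fun i => x (σ i)) = θ x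

/-- The diagonal matrix `Diag(w)` as an element of `Sⁿ`. -/
noncomputable def diagSym {n : ℕ} (w : Fin n → ℝ) : Sym n :=
  ⟨Matrix.diagonal w, Matrix.isSymm_diagonal w⟩

/-- The `i`-th order statistic: `orderStat x i` is the `i`-th largest entry of `x`. -/
noncomputable def orderStat {n : ℕ} (x : Fin n → ℝ) : Fin n → ℝ :=
  fun i => x (Tuple.sort (fun j => -x j) i)

/-!
The ordered eigenvalue map has the directional derivative `λ'(X; ·)`: limits of eigenvectors of
`X + t • H'` are block diagonal in an eigenbasis of `X` and diagonalise the blocks of `H`. Hence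
`dg(X)(H) = dθ(λ(X))(λ'(X; H))`. Either regularity assumption gives `⟨Y, ·⟩ ≤ dg(X)`, and
evaluating at matrices diagonal in the basis `U` yields `⟨v, ·⟩ ≤ dθ(λ(X))`. Fan's inequality,
applied block by block, gives
`⟨Y, H⟩ ≤ ⟨v, λ'(X; H)⟩ ≤ dθ(λ(X))(λ'(X; H)) = dg(X)(H)`,
so `H` is critical exactly when both inequalities are equalities; equality in the first is the
equality case of Fan's inequality, a simultaneous ordered spectral decomposition of every block.
-/

section Subderivative

lemma inv_mul_sub_coe_le_iff {t : ℝ} (ht : 0 < t) (z : EReal) (a c : ℝ) :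
    ((t⁻¹ : ℝ) : EReal) * (z - a) ≤ c ↔ z ≤ ((a + t * c : ℝ) : EReal) := by
  induction z using EReal.rec with
  | bot => simp [EReal.coe_mul_bot_of_pos (inv_pos.mpr ht)]
  | top => simp [EReal.coe_mul_top_of_pos (inv_pos.mpr ht), -EReal.coe_add, -EReal.coe_mul]
  | coe r => norm_cast; rw [inv_mul_le_iff₀ ht, sub_le_iff_le_add']

lemma coe_le_inv_mul_sub_iff {t : ℝ} (ht : 0 < t) (z : EReal) (a c : ℝ) :
    (c : EReal) ≤ ((t⁻¹ : ℝ) : EReal) * (z - a) ↔ ((a + t * c : ℝ) : EReal) ≤ z := by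
  induction z using EReal.rec with
  | bot => simp [EReal.coe_mul_bot_of_pos (inv_pos.mpr ht), -EReal.coe_add, -EReal.coe_mul]
  | top => simp [EReal.coe_mul_top_of_pos (inv_pos.mpr ht)]
  | coe r => norm_cast; rw [le_inv_mul_iff₀ ht, le_sub_iff_add_le']

lemma sub_coe_sub_coe (z : EReal) (a b : ℝ) : z - a - b = z - ((a + b : ℝ) : EReal) := by
  induction z using EReal.rec with
  | bot => simp
  | top => rw [EReal.top_sub_coe, EReal.top_sub_coe, EReal.top_sub_coe]
  | coe r => norm_cast; rw [sub_sub]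

lemma IsFiniteAt.coe_toReal {f : E → EReal} {x : E} (hf : IsFiniteAt f x) :
    (((f x).toReal : ℝ) : EReal) = f x :=
  EReal.coe_toReal hf.1 hf.2

lemma eventually_fst_pos [TopologicalSpace E] (w : E) :
    ∀ᶠ p : ℝ × E in 𝓝[>] 0 ×ˢ 𝓝 w, 0 < p.1 :=
  tendsto_fst.eventually self_mem_nhdsWithin

variable [AddCommGroup E] [Module ℝ E] [TopologicalSpace E]

lemma tendsto_add_smul [ContinuousAdd E] [ContinuousSMul ℝ E] (x w : E) :
    Tendsto (fun p : ℝ × E => x + p.1 • p.2) (𝓝[>] 0 ×ˢ 𝓝 w) (𝓝 x) := by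
  have hcont : Continuous fun p : ℝ × E => x + p.1 • p.2 := by fun_prop
  refine (hcont.tendsto' (0, w) x (by simp)).mono_left ?_
  rw [nhds_prod_eq]
  exact prod_mono_left _ nhdsWithin_le_nhds

lemma subderiv_le_subderiv_of_tendsto {F : Type*} [AddCommGroup F] [Module ℝ F]
    [TopologicalSpace F] {f₁ : E → EReal} {f₂ : F → EReal} {x₁ w₁ : E} {x₂ w₂ : F}
    {φ : ℝ × E → F} (hφ : Tendsto φ (𝓝[>] 0 ×ˢ 𝓝 w₁) (𝓝 w₂)) (hx : f₂ x₂ = f₁ x₁)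
    (hf : ∀ t > 0, ∀ w, f₂ (x₂ + t • φ (t, w)) = f₁ (x₁ + t • w)) :
    subderiv f₂ x₂ w₂ ≤ subderiv f₁ x₁ w₁ := by
  have hgraph : Tendsto (fun p => (p.1, φ p)) (𝓝[>] 0 ×ˢ 𝓝 w₁) (𝓝[>] (0 : ℝ) ×ˢ 𝓝 w₂) :=
    tendsto_fst.prodMk hφ
  have hquot : ∀ᶠ p : ℝ × E in 𝓝[>] 0 ×ˢ 𝓝 w₁,
      ((p.1⁻¹ : ℝ) : EReal) * (f₂ (x₂ + p.1 • φ p) - f₂ x₂) =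
        ((p.1⁻¹ : ℝ) : EReal) * (f₁ (x₁ + p.1 • p.2) - f₁ x₁) := by
    filter_upwards [eventually_fst_pos w₁] with p hp
    rw [hf p.1 hp p.2, hx]
  calc subderiv f₂ x₂ w₂
      ≤ liminf (fun p : ℝ × E => ((p.1⁻¹ : ℝ) : EReal) * (f₂ (x₂ + p.1 • φ p) - f₂ x₂))
          (𝓝[>] 0 ×ˢ 𝓝 w₁) := liminf_le_liminf_of_le hgraph
    _ = subderiv f₁ x₁ w₁ := liminf_congr hquot

/-- `ip` is an inner product on `E` which is jointly continuous for the topology of `E`. It is a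
predicate on pairings, rather than an `InnerProductSpace` instance, because the notions of
subgradient and normal cone take the pairing as an argument. -/
structure IsContinuousInnerProduct (ip : E → E → ℝ) : Prop where
  symm : ∀ v w, ip v w = ip w v
  add_right : ∀ u v w, ip u (v + w) = ip u v + ip u w
  smul_right : ∀ (t : ℝ) v w, ip v (t • w) = t * ip v w
  self_pos : ∀ w ≠ 0, 0 < ip w w
  continuous : Continuous fun p : E × E => ip p.1 p.2

namespace IsContinuousInnerProduct

variable {ip : E → E → ℝ}

lemma zero_right (hip : IsContinuousInnerProduct ip) (v : E) : ip v 0 = 0 := by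
  simpa using hip.smul_right 0 v 0

lemma nrm_zero (hip : IsContinuousInnerProduct ip) : nrm ip 0 = 0 := by
  rw [nrm, hip.zero_right, Real.sqrt_zero]

lemma nrm_pos (hip : IsContinuousInnerProduct ip) {w : E} (hw : w ≠ 0) : 0 < nrm ip w :=
  Real.sqrt_pos.mpr (hip.self_pos w hw)

lemma nrm_smul (hip : IsContinuousInnerProduct ip) {t : ℝ} (ht : 0 ≤ t) (w : E) :
    nrm ip (t • w) = t * nrm ip w := by
  have hsq : ip (t • w) (t • w) = t ^ 2 * ip w w := by
    rw [hip.smul_right, hip.symm, hip.smul_right]; ring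
  rw [nrm, hsq, Real.sqrt_mul (sq_nonneg t), Real.sqrt_sq ht, nrm]

lemma continuous_right (hip : IsContinuousInnerProduct ip) (v : E) : Continuous (ip v) :=
  hip.continuous.comp (continuous_const.prodMk continuous_id)

lemma continuous_nrm (hip : IsContinuousInnerProduct ip) : Continuous (nrm ip) :=
  (hip.continuous.comp (continuous_id.prodMk continuous_id)).sqrt

end IsContinuousInnerProduct

variable {ip : E → E → ℝ} {f : E → EReal} {x v : E}

lemma RegSubgrad.eventually_le (hip : IsContinuousInnerProduct ip) (h : RegSubgrad ip f x v)
    {ε : ℝ} (hε : 0 < ε) :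
    ∀ᶠ z in 𝓝 x,
      (((f x).toReal + (ip v (z - x) - ε * nrm ip (z - x)) : ℝ) : EReal) ≤ f z := by
  have hlt : ((-ε : ℝ) : EReal) < 0 := by exact_mod_cast neg_neg_of_pos hε
  have hquot := eventually_lt_of_lt_liminf (hlt.trans_le h.2)
  filter_upwards [eventually_nhdsWithin_iff.mp hquot] with z hz
  obtain rfl | hne := eq_or_ne z x
  · simp [hip.zero_right, hip.nrm_zero, h.1.coe_toReal]
  · have hz := (hz hne).le
    rw [← h.1.coe_toReal, sub_coe_sub_coe,
      coe_le_inv_mul_sub_iff (hip.nrm_pos (sub_ne_zero.mpr hne))] at hz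
    convert hz using 2
    ring

lemma RegSubgrad.coe_le_subderiv [ContinuousAdd E] [ContinuousSMul ℝ E]
    (hip : IsContinuousInnerProduct ip) (h : RegSubgrad ip f x v) (w : E) :
    ((ip v w : ℝ) : EReal) ≤ subderiv f x w := by
  refine EReal.ge_of_forall_gt_iff_ge.mp fun c hc => ?_
  have hc : c < ip v w := by exact_mod_cast hc
  obtain ⟨ε, hε, hcε⟩ : ∃ ε > 0, c < ip v w - ε * nrm ip w := by
    have hcont : Continuous fun ε : ℝ => ip v w - ε * nrm ip w := by fun_prop
    have hev := (hcont.tendsto' 0 (ip v w) (by simp)).eventually_const_lt hc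
    obtain ⟨ε, hcε, hε⟩ := ((hev.filter_mono nhdsWithin_le_nhds).and
      (self_mem_nhdsWithin : Set.Ioi (0 : ℝ) ∈ 𝓝[>] 0)).exists
    exact ⟨ε, hε, hcε⟩
  have hcont : Continuous fun w' => ip v w' - ε * nrm ip w' :=
    (hip.continuous_right v).sub (continuous_const.mul hip.continuous_nrm)
  refine le_liminf_of_le (by isBoundedDefault) ?_
  filter_upwards [eventually_fst_pos w,
    (tendsto_add_smul x w).eventually (h.eventually_le hip hε),
    tendsto_snd.eventually ((hcont.tendsto w).eventually_const_lt hcε)] with p ht hp hcp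
  rw [add_sub_cancel_left, hip.smul_right, hip.nrm_smul ht.le] at hp
  rw [← h.1.coe_toReal, coe_le_inv_mul_sub_iff ht]
  refine le_trans (EReal.coe_le_coe_iff.mpr ?_) hp
  nlinarith

lemma subderiv_le_of_mem_tangentCone_epiSet (hf : IsFiniteAt f x) {w : E} {β : ℝ}
    (h : (w, β) ∈ tangentCone (epiSet f) (x, (f x).toReal)) : subderiv f x w ≤ β := by
  obtain ⟨t, ws, ht, ht0, hws, hmem⟩ := h
  have hseq : Tendsto (fun k => (t k, (ws k).1)) atTop (𝓝[>] (0 : ℝ) ×ˢ 𝓝 w) :=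
    (tendsto_nhdsWithin_iff.mpr ⟨ht0, Eventually.of_forall ht⟩).prodMk hws.fst_nhds
  have hβ : Tendsto (fun k => (((ws k).2 : ℝ) : EReal)) atTop (𝓝 (β : EReal)) :=
    (continuous_coe_real_ereal.tendsto β).comp hws.snd_nhds
  have hquot (k : ℕ) : (((t k)⁻¹ : ℝ) : EReal) * (f (x + t k • (ws k).1) - f x) ≤ (ws k).2 := by
    rw [← hf.coe_toReal]
    exact (inv_mul_sub_coe_le_iff (ht k) _ _ _).mpr (hmem k)
  calc subderiv f x w
      ≤ liminf (fun k => (((t k)⁻¹ : ℝ) : EReal) * (f (x + t k • (ws k).1) - f x)) atTop :=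
        liminf_le_liminf_of_le hseq
    _ ≤ liminf (fun k => (((ws k).2 : ℝ) : EReal)) atTop :=
        liminf_le_liminf (Eventually.of_forall hquot)
    _ = β := hβ.liminf_eq

lemma mem_tangentCone_epiSet_of_subderiv_lt [FirstCountableTopology E] (hf : IsFiniteAt f x)
    {w : E} {β : ℝ} (h : subderiv f x w < β) :
    (w, β) ∈ tangentCone (epiSet f) (x, (f x).toReal) := by
  have hfreq := (frequently_lt_of_liminf_lt (by isBoundedDefault) h).and_eventually
    (eventually_fst_pos w)
  obtain ⟨s, hs, hsp⟩ := exists_seq_forall_of_frequently hfreq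
  refine ⟨fun k => (s k).1, fun k => ((s k).2, β), fun k => (hsp k).2,
    (tendsto_fst.comp hs).mono_right nhdsWithin_le_nhds,
    (tendsto_snd.comp hs).prodMk_nhds tendsto_const_nhds, fun k => ?_⟩
  obtain ⟨hq, ht⟩ := hsp k
  rw [← hf.coe_toReal] at hq
  exact (inv_mul_sub_coe_le_iff ht _ _ _).mp hq.le

lemma mem_regNormalCone_epiSet_iff [FirstCountableTopology E] (hf : IsFiniteAt f x) :
    (v, (-1 : ℝ)) ∈ regNormalCone (ipProd ip) (epiSet f) (x, (f x).toReal) ↔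
      ∀ w, ((ip v w : ℝ) : EReal) ≤ subderiv f x w := by
  constructor
  · intro h w
    refine EReal.le_of_forall_lt_iff_le.mp fun β hβ => EReal.coe_le_coe_iff.mpr ?_
    have hle : ip v w + -1 * β ≤ 0 := h _ (mem_tangentCone_epiSet_of_subderiv_lt hf hβ)
    linarith
  · rintro h ⟨w, β⟩ hw
    have hle : ip v w ≤ β :=
      EReal.coe_le_coe_iff.mp ((h w).trans (subderiv_le_of_mem_tangentCone_epiSet hf hw))
    change ip v w + -1 * β ≤ 0
    linarith

lemma LimSubgrad.mem_limNormalCone_epiSet [ContinuousAdd E] [ContinuousSMul ℝ E]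
    [FirstCountableTopology E] (hip : IsContinuousInnerProduct ip) (hf : IsFiniteAt f x)
    (h : LimSubgrad ip f x v) :
    (v, (-1 : ℝ)) ∈ limNormalCone (ipProd ip) (epiSet f) (x, (f x).toReal) := by
  obtain ⟨xs, vs, hreg, hxs, hvs, hfxs⟩ := h
  refine ⟨fun k => (xs k, (f (xs k)).toReal), fun k => (vs k, -1),
    fun k => (hreg k).1.coe_toReal.ge,
    fun k => (mem_regNormalCone_epiSet_iff (hreg k).1).mpr ((hreg k).coe_le_subderiv hip),
    hxs.prodMk_nhds ((EReal.tendsto_toReal hf.1 hf.2).comp hfxs),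
    hvs.prodMk_nhds tendsto_const_nhds⟩

lemma SubdiffRegularAt.coe_le_subderiv [ContinuousAdd E] [ContinuousSMul ℝ E]
    [FirstCountableTopology E] (hip : IsContinuousInnerProduct ip)
    (h : SubdiffRegularAt ip f x) (hv : LimSubgrad ip f x v) (w : E) :
    ((ip v w : ℝ) : EReal) ≤ subderiv f x w :=
  (mem_regNormalCone_epiSet_iff h.1).mp (h.2.ge (hv.mem_limNormalCone_epiSet hip h.1)) w

end Subderivative

section OrderedSpectralDecomposition

lemma exists_perm_of_map_univ_eq {α : Type*} [LinearOrder α] {n : ℕ} {f g : Fin n → α}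
    (h : Multiset.map f Finset.univ.val = Multiset.map g Finset.univ.val) :
    ∃ τ : Equiv.Perm (Fin n), f = g ∘ τ := by
  have ofFn_perm : (List.ofFn f).Perm (List.ofFn g) := by
    rw [Fin.univ_val_map, Fin.univ_val_map] at h
    exact Multiset.coe_eq_coe.mp h
  have sorted_eq : f ∘ Tuple.sort f = g ∘ Tuple.sort g := by
    have sorted_perm := (((Tuple.sort f).ofFn_comp_perm f).trans ofFn_perm).trans
      ((Tuple.sort g).ofFn_comp_perm g).symm
    exact List.ofFn_injective (sorted_perm.eq_of_pairwise'
      (Tuple.monotone_sort f).sortedLE_ofFn.pairwise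
      (Tuple.monotone_sort g).sortedLE_ofFn.pairwise)
  refine ⟨(Tuple.sort f).symm.trans (Tuple.sort g), funext fun i => ?_⟩
  simpa using congrFun sorted_eq ((Tuple.sort f).symm i)

lemma antitone_eq_of_eq_comp_perm {α : Type*} [PartialOrder α] {n : ℕ} {z w : Fin n → α}
    (hz : Antitone z) (hw : Antitone w) {τ : Equiv.Perm (Fin n)} (h : w = z ∘ τ) : w = z := by
  subst h
  exact Tuple.unique_antitone (τ := 1) hw hz

lemma submatrix_mul_diagonal_comp_mul_transpose {m ι R : Type*} [Fintype ι] [DecidableEq ι]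
    [CommRing R] (P : Matrix m ι R) (w : ι → R) (τ : Equiv.Perm ι) :
    P.submatrix id τ * diagonal (w ∘ τ) * (P.submatrix id τ)ᵀ = P * diagonal w * Pᵀ := by
  ext i j
  rw [mul_apply, mul_apply]
  simp only [mul_diagonal, submatrix_apply, id, transpose_apply, Function.comp]
  exact Equiv.sum_comp τ fun k => P i k * w k * P j k

lemma submatrix_mul_transpose_self_eq_one {ι R : Type*} [Fintype ι] [DecidableEq ι]
    [CommRing R] {P : Matrix ι ι R} (hP : P * Pᵀ = 1) (τ : Equiv.Perm ι) :
    P.submatrix id τ * (P.submatrix id τ)ᵀ = 1 := by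
  rw [transpose_submatrix, submatrix_mul_equiv, hP, submatrix_id_id]

lemma isSymm_mul_mul_transpose {m ι R : Type*} [Fintype ι] [CommRing R] (P : Matrix m ι R)
    {A : Matrix ι ι R} (hA : A.IsSymm) : (P * A * Pᵀ).IsSymm := by
  rw [IsSymm, transpose_mul, transpose_mul, transpose_transpose, hA, Matrix.mul_assoc]

variable {n : ℕ} {A P : Matrix (Fin n) (Fin n) ℝ}

lemma exists_eigval_eq_eigenvalues_comp (hA : A.IsHermitian) :
    ∃ τ : Equiv.Perm (Fin n), eigval A = hA.eigenvalues ∘ τ :=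
  ⟨Tuple.sort fun j => -hA.eigenvalues j, by rw [eigval, dif_pos hA]; rfl⟩

lemma eigval_antitone (A : Matrix (Fin n) (Fin n) ℝ) : Antitone (eigval A) := by
  unfold eigval
  split_ifs with hA
  · exact fun i j hij => neg_le_neg_iff.mp (Tuple.monotone_sort (-hA.eigenvalues ·) hij)
  · exact antitone_const

lemma exists_eigval_conj_diagonal_eq_comp (hP : P * Pᵀ = 1) (w : Fin n → ℝ) :
    ∃ τ : Equiv.Perm (Fin n), eigval (P * diagonal w * Pᵀ) = w ∘ τ := by
  have hermitian : (P * diagonal w * Pᵀ).IsHermitian :=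
    isHermitian_iff_isSymm.mpr (isSymm_mul_mul_transpose P (isSymm_diagonal w))
  have charpoly_eq : (P * diagonal w * Pᵀ).charpoly = (diagonal w).charpoly := by
    rw [charpoly_mul_comm, ← mul_assoc, mul_eq_one_comm.mp hP, one_mul]
  have roots_eq := hermitian.roots_charpoly_eq_eigenvalues
  rw [charpoly_eq, charpoly_diagonal, Polynomial.roots_prod _ _
    (Finset.prod_ne_zero_iff.mpr fun i _ => Polynomial.X_sub_C_ne_zero (w i))] at roots_eq
  simp only [Polynomial.roots_X_sub_C, Multiset.bind_singleton] at roots_eq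
  obtain ⟨τ, hτ⟩ := exists_eigval_eq_eigenvalues_comp hermitian
  obtain ⟨ρ, hρ⟩ := exists_perm_of_map_univ_eq roots_eq.symm
  exact ⟨τ.trans ρ, hτ.trans (congrArg (· ∘ τ) hρ)⟩

lemma eigval_eq_of_antitone (hP : P * Pᵀ = 1) {z : Fin n → ℝ} (hz : Antitone z)
    (hA : A = P * diagonal z * Pᵀ) : eigval A = z := by
  subst hA
  obtain ⟨τ, hτ⟩ := exists_eigval_conj_diagonal_eq_comp hP z
  exact antitone_eq_of_eq_comp_perm hz (eigval_antitone _) hτ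

lemma exists_mem_eigOrth (hA : A.IsSymm) : ∃ P, P ∈ eigOrth A := by
  have hermitian : A.IsHermitian := isHermitian_iff_isSymm.mpr hA
  obtain ⟨τ, hτ⟩ := exists_eigval_eq_eigenvalues_comp hermitian
  let Q : Matrix (Fin n) (Fin n) ℝ := hermitian.eigenvectorUnitary
  have star_eq : star Q = Qᵀ := conjTranspose_eq_transpose_of_trivial Q
  have hQ : Q * Qᵀ = 1 := star_eq ▸ mem_unitaryGroup_iff.mp hermitian.eigenvectorUnitary.2
  have hAQ : A = Q * diagonal hermitian.eigenvalues * Qᵀ := by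
    have spectral := hermitian.spectral_theorem
    rwa [Unitary.conjStarAlgAut_apply, star_eq] at spectral
  refine ⟨Q.submatrix id τ, submatrix_mul_transpose_self_eq_one hQ τ, ?_⟩
  rw [hτ, submatrix_mul_diagonal_comp_mul_transpose]
  exact hAQ

end OrderedSpectralDecomposition

section FanInequality

variable {n : ℕ} {A B P Q W : Matrix (Fin n) (Fin n) ℝ}

lemma map_sq_mem_doublyStochastic (hW : W * Wᵀ = 1) :
    W.map (· ^ 2) ∈ doublyStochastic ℝ (Fin n) := by
  have hW' : Wᵀ * W = 1 := mul_eq_one_comm.mp hW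
  refine mem_doublyStochastic_iff_sum.mpr ⟨fun i j => sq_nonneg _, fun i => ?_, fun j => ?_⟩
  · simpa [mul_apply, sq] using congrFun₂ hW i i
  · simpa [mul_apply, sq] using congrFun₂ hW' j j

lemma dotProduct_mulVec_le_of_mem_doublyStochastic {ι : Type*} [Fintype ι] [DecidableEq ι]
    {S : Matrix ι ι ℝ} (hS : S ∈ doublyStochastic ℝ ι) {a b : ι → ℝ} (hab : Monovary a b) :
    a ⬝ᵥ S *ᵥ b ≤ a ⬝ᵥ b := by
  have halfspace_convex : Convex ℝ {M : Matrix ι ι ℝ | a ⬝ᵥ M *ᵥ b ≤ a ⬝ᵥ b} :=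
    convex_halfSpace_le ⟨fun M N => by rw [add_mulVec, dotProduct_add],
      fun c M => by rw [smul_mulVec, dotProduct_smul]⟩ _
  have hS' : S ∈ convexHull ℝ {M | ∃ σ : Equiv.Perm ι, σ.permMatrix ℝ = M} :=
    doublyStochastic_eq_convexHull_permMatrix (R := ℝ) (n := ι) ▸ hS
  refine convexHull_min ?_ halfspace_convex hS'
  rintro _ ⟨σ, rfl⟩
  change a ⬝ᵥ σ.permMatrix ℝ *ᵥ b ≤ a ⬝ᵥ b
  rw [permMatrix_mulVec]
  exact hab.sum_mul_comp_perm_le_sum_mul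

lemma trace_conj_diagonal_mul_conj_diagonal {ι R : Type*} [Fintype ι] [DecidableEq ι] [CommRing R]
    (P Q : Matrix ι ι R) (a b : ι → R) :
    ((P * diagonal a * Pᵀ) * (Q * diagonal b * Qᵀ)).trace =
      a ⬝ᵥ ((Pᵀ * Q).map (· ^ 2) *ᵥ b) := by
  have cyclic : ((P * diagonal a * Pᵀ) * (Q * diagonal b * Qᵀ)).trace =
      ((diagonal a * (Pᵀ * Q)) * (diagonal b * (Pᵀ * Q)ᵀ)).trace := by
    rw [transpose_mul, transpose_transpose, Matrix.mul_assoc P, Matrix.mul_assoc P, trace_mul_comm]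
    simp only [Matrix.mul_assoc]
  rw [cyclic]
  simp only [trace, diag, dotProduct, mulVec, map_apply, Finset.mul_sum,
    mul_apply (M := diagonal a * (Pᵀ * Q)), diagonal_mul, transpose_apply]
  exact Finset.sum_congr rfl fun i _ => Finset.sum_congr rfl fun j _ => by ring

lemma trace_conj_diagonal_mul_self {ι R : Type*} [Fintype ι] [DecidableEq ι] [CommRing R]
    {P : Matrix ι ι R} (hP : P * Pᵀ = 1) (a b : ι → R) :
    ((P * diagonal a * Pᵀ) * (P * diagonal b * Pᵀ)).trace = a ⬝ᵥ b := by
  rw [trace_conj_diagonal_mul_conj_diagonal, mul_eq_one_comm.mp hP,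
    Matrix.map_one (· ^ 2) (zero_pow two_ne_zero) (one_pow 2), one_mulVec]

lemma transpose_mul_mul_transpose_eq_one (hP : P * Pᵀ = 1) (hQ : Q * Qᵀ = 1) :
    (Pᵀ * Q) * (Pᵀ * Q)ᵀ = 1 := by
  rw [transpose_mul, transpose_transpose, Matrix.mul_assoc, ← Matrix.mul_assoc Q, hQ,
    Matrix.one_mul, mul_eq_one_comm.mp hP]

lemma trace_mul_le_eigval_dotProduct (hA : A.IsSymm) (hB : B.IsSymm) :
    (A * B).trace ≤ eigval A ⬝ᵥ eigval B := by
  obtain ⟨P, hP, hAP⟩ := exists_mem_eigOrth hA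
  obtain ⟨Q, hQ, hBQ⟩ := exists_mem_eigOrth hB
  calc (A * B).trace = eigval A ⬝ᵥ ((Pᵀ * Q).map (· ^ 2) *ᵥ eigval B) := by
        rw [← trace_conj_diagonal_mul_conj_diagonal, ← hAP, ← hBQ]
    _ ≤ eigval A ⬝ᵥ eigval B :=
        dotProduct_mulVec_le_of_mem_doublyStochastic
          (map_sq_mem_doublyStochastic (transpose_mul_mul_transpose_eq_one hP hQ))
          ((eigval_antitone A).monovary (eigval_antitone B))

lemma trace_mul_self_eq_eigval_dotProduct (hA : A.IsSymm) :
    (A * A).trace = eigval A ⬝ᵥ eigval A := by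
  obtain ⟨P, hP, hAP⟩ := exists_mem_eigOrth hA
  rw [← trace_conj_diagonal_mul_self hP, ← hAP]

lemma trace_sub_mul_self {ι R : Type*} [Fintype ι] [CommRing R] (A B : Matrix ι ι R) :
    ((A - B) * (A - B)).trace = (A * A).trace - 2 * (A * B).trace + (B * B).trace := by
  rw [sub_mul, mul_sub, mul_sub, trace_sub, trace_sub, trace_sub, trace_mul_comm B A]
  ring

lemma dotProduct_sub_self {ι R : Type*} [Fintype ι] [CommRing R] (a b : ι → R) :
    (a - b) ⬝ᵥ (a - b) = a ⬝ᵥ a - 2 * (a ⬝ᵥ b) + b ⬝ᵥ b := by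
  rw [sub_dotProduct, dotProduct_sub, dotProduct_sub, dotProduct_comm b a]
  ring

lemma trace_mul_self_pos {ι : Type*} [Fintype ι] {A : Matrix ι ι ℝ} (hA : A.IsSymm)
    (hne : A ≠ 0) : 0 < (A * A).trace := by
  have hAA : Aᴴ * A = A * A := by rw [conjTranspose_eq_transpose_of_trivial, hA]
  rw [← hAA]
  exact (posSemidef_conjTranspose_mul_self A).trace_nonneg.lt_of_ne'
    (trace_conjTranspose_mul_self_eq_zero_iff.not.mpr hne)

lemma eigval_sub_dotProduct_self_le (hA : A.IsSymm) (hB : B.IsSymm) :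
    (eigval A - eigval B) ⬝ᵥ (eigval A - eigval B) ≤ ((A - B) * (A - B)).trace := by
  rw [trace_sub_mul_self, dotProduct_sub_self, trace_mul_self_eq_eigval_dotProduct hA,
    trace_mul_self_eq_eigval_dotProduct hB]
  linarith [trace_mul_le_eigval_dotProduct hA hB]

lemma eigval_add_eq_of_trace_mul_eq (hA : A.IsSymm) (hB : B.IsSymm)
    (h : (A * B).trace = eigval A ⬝ᵥ eigval B) : eigval (A + B) = eigval A + eigval B := by
  have hAB : (A + B).IsSymm := hA.add hB
  have self_eq := trace_mul_self_eq_eigval_dotProduct hAB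
  have self_expand : ((A + B) * (A + B)).trace =
      (eigval A + eigval B) ⬝ᵥ (eigval A + eigval B) := by
    rw [add_mul, mul_add, mul_add, trace_add, trace_add, trace_add, trace_mul_comm B A, h,
      trace_mul_self_eq_eigval_dotProduct hA, trace_mul_self_eq_eigval_dotProduct hB,
      add_dotProduct, dotProduct_add, dotProduct_add, dotProduct_comm (eigval B) (eigval A)]
  have self_le : ((A + B) * (A + B)).trace ≤ (eigval A + eigval B) ⬝ᵥ eigval (A + B) := by
    rw [add_mul, trace_add, add_dotProduct]
    exact add_le_add (trace_mul_le_eigval_dotProduct hA hAB) (trace_mul_le_eigval_dotProduct hB hAB)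
  have dist_sq_nonpos : (eigval (A + B) - (eigval A + eigval B)) ⬝ᵥ
      (eigval (A + B) - (eigval A + eigval B)) ≤ 0 := by
    rw [dotProduct_sub_self, dotProduct_comm (eigval (A + B)) (eigval A + eigval B)]
    linarith
  exact sub_eq_zero.mp (dotProduct_self_eq_zero.mp
    (dist_sq_nonpos.antisymm (Finset.sum_nonneg fun i _ => mul_self_nonneg _)))

lemma eq_of_eigval_dotProduct_le_trace_mul (hA : A.IsSymm) (hB : B.IsSymm)
    (hAB : eigval A = eigval B) (h : eigval A ⬝ᵥ eigval A ≤ (A * B).trace) : A = B := by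
  by_contra hne
  have dist_sq_pos := trace_mul_self_pos (hA.sub hB) (sub_ne_zero.mpr hne)
  rw [trace_sub_mul_self, trace_mul_self_eq_eigval_dotProduct hA,
    trace_mul_self_eq_eigval_dotProduct hB, ← hAB] at dist_sq_pos
  linarith

lemma simOrdSpec_of_trace_mul_eq (hA : A.IsSymm) (hB : B.IsSymm)
    (h : (A * B).trace = eigval A ⬝ᵥ eigval B) : simOrdSpec A B := by
  obtain ⟨P, hP, hABP⟩ := exists_mem_eigOrth (hA.add hB)
  set A' := P * diagonal (eigval A) * Pᵀ with hA'
  set B' := P * diagonal (eigval B) * Pᵀ with hB'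
  have add_eq : A + B = A' + B' := by
    rw [hABP, eigval_add_eq_of_trace_mul_eq hA hB h, hA', hB', ← Matrix.add_mul,
      ← Matrix.mul_add, diagonal_add]
    rfl
  have eigval_A' : eigval A' = eigval A := eigval_eq_of_antitone hP (eigval_antitone A) hA'
  have eigval_B' : eigval B' = eigval B := eigval_eq_of_antitone hP (eigval_antitone B) hB'
  have symm_A' : A'.IsSymm := isSymm_mul_mul_transpose P (isSymm_diagonal _)
  have trace_sum : (A * A').trace + (A * B').trace =
      eigval A ⬝ᵥ eigval A + eigval A ⬝ᵥ eigval B := by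
    rw [← trace_add, ← mul_add, ← add_eq, mul_add, trace_add, h,
      trace_mul_self_eq_eigval_dotProduct hA]
  have trace_AB'_le : (A * B').trace ≤ eigval A ⬝ᵥ eigval B :=
    eigval_B' ▸ trace_mul_le_eigval_dotProduct hA (isSymm_mul_mul_transpose P (isSymm_diagonal _))
  have A_eq : A = A' :=
    eq_of_eigval_dotProduct_le_trace_mul hA symm_A' eigval_A'.symm (by linarith)
  have B_eq : B = B' := add_left_cancel (a := A) (by rw [add_eq, ← A_eq])
  exact ⟨P, hP, A_eq, B_eq⟩

lemma simOrdSpec_iff_trace_mul_eq (hA : A.IsSymm) (hB : B.IsSymm) :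
    simOrdSpec A B ↔ (A * B).trace = eigval A ⬝ᵥ eigval B := by
  refine ⟨?_, simOrdSpec_of_trace_mul_eq hA hB⟩
  rintro ⟨P, hP, hAP, hBP⟩
  rw [← trace_conj_diagonal_mul_self hP, ← hAP, ← hBP]

lemma continuous_eigval : Continuous fun A : Sym n => eigval A.val := by
  refine continuous_iff_continuousAt.mpr fun A => continuousAt_pi.mpr fun i =>
    tendsto_iff_norm_sub_tendsto_zero.mpr ?_
  have bound : ∀ B : Sym n, ‖eigval B.val i - eigval A.val i‖ ≤
      √((B.val - A.val) * (B.val - A.val)).trace := fun B => by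
    refine Real.abs_le_sqrt (le_trans ?_ (eigval_sub_dotProduct_self_le B.2 A.2))
    rw [sq]
    exact Finset.single_le_sum (f := fun j => (eigval B.val - eigval A.val) j *
      (eigval B.val - eigval A.val) j) (fun j _ => mul_self_nonneg _) (Finset.mem_univ i)
  refine squeeze_zero (fun _ => norm_nonneg _) bound ?_
  have sqrt_trace_continuous : Continuous fun B : Sym n =>
      √((B.val - A.val) * (B.val - A.val)).trace := by fun_prop
  simpa using sqrt_trace_continuous.tendsto A

end FanInequality

section Blocks

variable {n : ℕ} (X : Matrix (Fin n) (Fin n) ℝ) (i : Fin n)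

lemma mem_blockSet {j : Fin n} : j ∈ blockSet X i ↔ eigval X j = eigval X i := by
  simp [blockSet]

lemma blockEmb_strictMono : StrictMono (blockEmb X i) := fun _ _ hab =>
  ((blockSet X i).orderIsoOfFin rfl).strictMono hab

lemma eigval_blockEmb (a : Fin (blockSet X i).card) :
    eigval X (blockEmb X i a) = eigval X i :=
  (mem_blockSet X i).mp ((blockSet X i).orderIsoOfFin rfl a).2

lemma blockEmb_blockIdx : blockEmb X i (blockIdx X i) = i := by
  simp [blockEmb, blockIdx]

lemma sum_blockEmb {M : Type*} [AddCommMonoid M] (f : Fin n → M) :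
    ∑ a, f (blockEmb X i a) = ∑ j with eigval X j = eigval X i, f j := by
  have hfilter : Finset.univ.filter (fun j => eigval X j = eigval X i) = blockSet X i := by
    ext j
    simp [mem_blockSet]
  rw [hfilter, ← Finset.sum_coe_sort (blockSet X i) f]
  exact Equiv.sum_comp ((blockSet X i).orderIsoOfFin rfl).toEquiv (fun x => f x)

lemma sum_blockEmb_eq_sum_univ {M : Type*} [AddCommMonoid M] {f : Fin n → M}
    (hf : ∀ j, eigval X j ≠ eigval X i → f j = 0) :
    ∑ a, f (blockEmb X i a) = ∑ j, f j := by
  rw [sum_blockEmb]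
  exact Finset.sum_subset (Finset.subset_univ _) fun j _ hj => hf j (by simpa using hj)

lemma eigval_blockMat_blockIdx_blockEmb (M : Matrix (Fin n) (Fin n) ℝ)
    (a : Fin (blockSet X i).card) :
    eigval (blockMat X M (blockEmb X i a)) (blockIdx X (blockEmb X i a)) =
      eigval (blockMat X M i) a := by
  -- The two block enumerations have propositionally equal index sets, so generalise over the set.
  suffices enumeration_irrel : ∀ s : Finset (Fin n), s = blockSet X i →
      ∀ h : blockEmb X i a ∈ s,
        eigval (of fun b c => M (s.orderIsoOfFin rfl b) (s.orderIsoOfFin rfl c))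
          ((s.orderIsoOfFin rfl).symm ⟨blockEmb X i a, h⟩) = eigval (blockMat X M i) a by
    refine enumeration_irrel (blockSet X (blockEmb X i a)) ?_ (mem_blockSet_self X _)
    ext j
    rw [mem_blockSet, mem_blockSet, eigval_blockEmb]
  rintro _ rfl h
  exact congrArg (eigval (blockMat X M i)) (OrderIso.symm_apply_apply _ a)

lemma lambdaDir_blockEmb (U H : Matrix (Fin n) (Fin n) ℝ) (a : Fin (blockSet X i).card) :
    lambdaDir X U H (blockEmb X i a) = eigval (blockMat X (Uᵀ * H * U) i) a :=
  eigval_blockMat_blockIdx_blockEmb X i (Uᵀ * H * U) a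

lemma blockMat_one : blockMat X 1 i = 1 :=
  submatrix_one _ (blockEmb_strictMono X i).injective

lemma blockMat_diagonal (w : Fin n → ℝ) :
    blockMat X (diagonal w) i = diagonal fun a => w (blockEmb X i a) :=
  submatrix_diagonal _ _ (blockEmb_strictMono X i).injective

lemma isSymm_blockMat {M : Matrix (Fin n) (Fin n) ℝ} (hM : M.IsSymm) : (blockMat X M i).IsSymm :=
  hM.submatrix (blockEmb X i)

lemma blockMat_mul (M : Matrix (Fin n) (Fin n) ℝ) {W : Matrix (Fin n) (Fin n) ℝ}
    (hW : ∀ j k, eigval X j ≠ eigval X k → W j k = 0) :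
    blockMat X (M * W) i = blockMat X M i * blockMat X W i := by
  ext a b
  change (M * W) (blockEmb X i a) (blockEmb X i b) =
    ∑ c, M (blockEmb X i a) (blockEmb X i c) * W (blockEmb X i c) (blockEmb X i b)
  rw [mul_apply]
  refine (sum_blockEmb_eq_sum_univ X i
    (f := fun k => M (blockEmb X i a) k * W k (blockEmb X i b)) fun k hk => ?_).symm
  rw [hW k _ (by rwa [eigval_blockEmb]), mul_zero]

end Blocks

section OrthogonalCompactness

variable {ι : Type*} [Fintype ι] [DecidableEq ι]

lemma isCompact_setOf_mul_transpose_eq_one : IsCompact {P : Matrix ι ι ℝ | P * Pᵀ = 1} := by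
  have box_compact : IsCompact (Set.univ.pi fun _ : ι => Set.univ.pi fun _ : ι =>
      Metric.closedBall (0 : ℝ) 1 : Set (Matrix ι ι ℝ)) :=
    isCompact_univ_pi fun _ => isCompact_univ_pi fun _ => isCompact_closedBall 0 1
  refine box_compact.of_isClosed_subset
    (isClosed_eq (by fun_prop) continuous_const) fun (P : Matrix ι ι ℝ) hP i _ j _ => ?_
  have unitary : P ∈ unitaryGroup ι ℝ := by
    rwa [mem_unitaryGroup_iff, star_eq_conjTranspose, conjTranspose_eq_transpose_of_trivial]
  exact mem_closedBall_zero_iff.mpr (entry_norm_bound_of_unitary unitary i j)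

lemma exists_tendsto_ultrafilter_of_mul_transpose_eq_one {κ : Type*} (l : Ultrafilter κ)
    {W : κ → Matrix ι ι ℝ} (hW : ∀ p, W p * (W p)ᵀ = 1) :
    ∃ W₀ : Matrix ι ι ℝ, W₀ * W₀ᵀ = 1 ∧ Tendsto W l (𝓝 W₀) :=
  isCompact_setOf_mul_transpose_eq_one.ultrafilter_le_nhds (l.map W)
    (le_principal_iff.mpr (Eventually.of_forall (f := (l : Filter κ)) hW))

end OrthogonalCompactness

section EigenvalueQuotients

variable {ι κ : Type*} [Fintype ι] [DecidableEq ι] {l : Filter κ} [l.NeBot] {t : κ → ℝ}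
  {K W : κ → Matrix ι ι ℝ} {L : κ → ι → ℝ} {d : ι → ℝ} {K₀ W₀ : Matrix ι ι ℝ}

lemma eigenvector_equation_apply {t : ℝ} {K W : Matrix ι ι ℝ} {L : ι → ℝ}
    (h : (diagonal d + t • K) * W = W * diagonal L) (j i : ι) :
    t * (K * W) j i = (L i - d j) * W j i := by
  have entry := congrFun₂ h j i
  rw [Matrix.add_mul, Matrix.add_apply, diagonal_mul, mul_diagonal, smul_mul, Matrix.smul_apply,
    smul_eq_mul] at entry
  linarith

lemma limit_eigenvectors_apply_eq_zero (ht : Tendsto t l (𝓝 0)) (hK : Tendsto K l (𝓝 K₀))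
    (hW : Tendsto W l (𝓝 W₀)) (hL : Tendsto L l (𝓝 d))
    (hdec : ∀ p, (diagonal d + t p • K p) * W p = W p * diagonal (L p)) {j i : ι}
    (hji : d j ≠ d i) : W₀ j i = 0 := by
  have entry_tendsto : Tendsto (fun p => (L p i - d j) * W p j i) l
      (𝓝 ((d i - d j) * W₀ j i)) :=
    ((hL.apply_nhds i).sub_const _).mul ((hW.apply_nhds j).apply_nhds i)
  have perturbation_tendsto : Tendsto (fun p => t p * (K p * W p) j i) l (𝓝 (0 * (K₀ * W₀) j i)) :=
    ht.mul (((hK.mul hW).apply_nhds j).apply_nhds i)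
  simp only [eigenvector_equation_apply (hdec _), zero_mul] at perturbation_tendsto
  exact (mul_eq_zero.mp (tendsto_nhds_unique entry_tendsto perturbation_tendsto)).resolve_left
    (sub_ne_zero.mpr hji.symm)

lemma exists_tendsto_eigenvalue_quotient (ht : Tendsto t l (𝓝[>] 0)) (hK : Tendsto K l (𝓝 K₀))
    (hW : Tendsto W l (𝓝 W₀)) (hL : Tendsto L l (𝓝 d)) (hW₀ : W₀ * W₀ᵀ = 1)
    (hdec : ∀ p, (diagonal d + t p • K p) * W p = W p * diagonal (L p)) (i : ι) :
    ∃ z : ℝ, Tendsto (fun p => (t p)⁻¹ * (L p i - d i)) l (𝓝 z) ∧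
      ∀ j, d j = d i → (K₀ * W₀) j i = z * W₀ j i := by
  have entry_tendsto : ∀ j, Tendsto (fun p => W p j i) l (𝓝 (W₀ j i)) := fun j =>
    (hW.apply_nhds j).apply_nhds i
  have product_tendsto : ∀ j, Tendsto (fun p => (K p * W p) j i) l (𝓝 ((K₀ * W₀) j i)) := fun j =>
    ((hK.mul hW).apply_nhds j).apply_nhds i
  have quotient_mul : ∀ j, d j = d i →
      ∀ᶠ p in l, (K p * W p) j i = (t p)⁻¹ * (L p i - d i) * W p j i := fun j hj => by
    filter_upwards [ht.eventually self_mem_nhdsWithin] with p hp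
    rw [mul_assoc, ← hj, ← eigenvector_equation_apply (hdec p), inv_mul_cancel_left₀ (ne_of_gt hp)]
  -- Column `i` of the orthogonal limit `W₀` is nonzero and supported on the block of `i`.
  obtain ⟨k, hk⟩ : ∃ k, W₀ k i ≠ 0 := by
    by_contra! column_zero
    have hW₀' : W₀ᵀ * W₀ = 1 := mul_eq_one_comm.mp hW₀
    simpa [mul_apply, column_zero] using congrFun₂ hW₀' i i
  have hki : d k = d i := by
    by_contra hne
    exact hk (limit_eigenvectors_apply_eq_zero (ht.mono_right nhdsWithin_le_nhds) hK hW hL hdec hne)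
  have quotient_tendsto : Tendsto (fun p => (t p)⁻¹ * (L p i - d i)) l
      (𝓝 ((K₀ * W₀) k i / W₀ k i)) := by
    refine ((product_tendsto k).div (entry_tendsto k) hk).congr' ?_
    filter_upwards [quotient_mul k hki, (entry_tendsto k).eventually_ne hk] with p hp hne
    rw [Pi.div_apply, hp, mul_div_cancel_right₀ _ hne]
  exact ⟨_, quotient_tendsto, fun j hj => tendsto_nhds_unique ((product_tendsto j).congr'
    (quotient_mul j hj)) (quotient_tendsto.mul (entry_tendsto j))⟩

end EigenvalueQuotients

section EigenvalueDirectionalDerivative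

variable {n : ℕ}

lemma eigval_blockMat_eq_of_eigenvectors {X K W : Matrix (Fin n) (Fin n) ℝ} {z : Fin n → ℝ}
    (hW : W * Wᵀ = 1) (hWblock : ∀ j k, eigval X j ≠ eigval X k → W j k = 0)
    (hKW : ∀ j k, eigval X j = eigval X k → (K * W) j k = z k * W j k)
    (hz : ∀ j k, j ≤ k → eigval X j = eigval X k → z k ≤ z j) (i : Fin n) :
    eigval (blockMat X K i) = fun a => z (blockEmb X i a) := by
  have same_block : ∀ a b, eigval X (blockEmb X i a) = eigval X (blockEmb X i b) := fun a b =>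
    (eigval_blockEmb X i a).trans (eigval_blockEmb X i b).symm
  have hP : blockMat X W i * (blockMat X W i)ᵀ = 1 := by
    rw [show (blockMat X W i)ᵀ = blockMat X Wᵀ i from rfl, ← blockMat_mul, hW, blockMat_one]
    exact fun j k hjk => hWblock k j hjk.symm
  have eigenvectors : blockMat X K i * blockMat X W i =
      blockMat X W i * diagonal fun a => z (blockEmb X i a) := by
    rw [← blockMat_mul X i K hWblock]
    ext a b
    rw [mul_diagonal, mul_comm]
    exact hKW _ _ (same_block a b)
  refine eigval_eq_of_antitone hP
    (fun a b hab => hz _ _ ((blockEmb_strictMono X i).monotone hab) (same_block a b)) ?_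
  rw [← eigenvectors, Matrix.mul_assoc, hP, Matrix.mul_one]

lemma conj_eigOrth_add_smul {X U : Matrix (Fin n) (Fin n) ℝ} (hU : U ∈ eigOrth X) (t : ℝ)
    (H : Matrix (Fin n) (Fin n) ℝ) {P : Matrix (Fin n) (Fin n) ℝ} (hP : P ∈ eigOrth (X + t • H)) :
    (diagonal (eigval X) + t • (Uᵀ * H * U)) * (Uᵀ * P) =
      Uᵀ * P * diagonal (eigval (X + t • H)) := by
  have hUU : Uᵀ * U = 1 := mul_eq_one_comm.mp hU.1
  have hPP : Pᵀ * P = 1 := mul_eq_one_comm.mp hP.1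
  have diagonal_mul_transpose : diagonal (eigval X) * Uᵀ = Uᵀ * X := by
    conv_rhs => rw [hU.2]
    rw [← Matrix.mul_assoc, ← Matrix.mul_assoc, hUU, Matrix.one_mul]
  have mul_eq : (X + t • H) * P = P * diagonal (eigval (X + t • H)) := by
    conv_lhs => rw [hP.2]
    rw [Matrix.mul_assoc, hPP, Matrix.mul_one]
  have conj_mul_transpose : (diagonal (eigval X) + t • (Uᵀ * H * U)) * Uᵀ = Uᵀ * (X + t • H) := by
    rw [Matrix.add_mul, diagonal_mul_transpose, smul_mul, Matrix.mul_assoc (Uᵀ * H), hU.1,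
      Matrix.mul_one, Matrix.mul_add, Matrix.mul_smul]
  rw [← Matrix.mul_assoc, conj_mul_transpose, Matrix.mul_assoc, mul_eq, Matrix.mul_assoc]

theorem tendsto_eigval_quotient {X : Sym n} {U : Matrix (Fin n) (Fin n) ℝ}
    (hU : U ∈ eigOrth X.val) (H : Sym n) :
    Tendsto (fun p : ℝ × Sym n => p.1⁻¹ • (eigval (X + p.1 • p.2).val - eigval X.val))
      (𝓝[>] 0 ×ˢ 𝓝 H) (𝓝 (lambdaDir X.val U H.val)) := by
  refine (tendsto_iff_ultrafilter _ _ _).mpr fun l hl => ?_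
  have ht : Tendsto (fun p : ℝ × Sym n => p.1) l (𝓝[>] 0) := tendsto_fst.mono_left hl
  have ht₀ : Tendsto (fun p : ℝ × Sym n => p.1) l (𝓝 0) := ht.mono_right nhdsWithin_le_nhds
  have hH : Tendsto (fun p : ℝ × Sym n => p.2) l (𝓝 H) := tendsto_snd.mono_left hl
  have hL : Tendsto (fun p : ℝ × Sym n => eigval (X + p.1 • p.2).val) l (𝓝 (eigval X.val)) :=
    (continuous_eigval.tendsto X).comp ((tendsto_add_smul X H).mono_left hl)
  have hK : Tendsto (fun p : ℝ × Sym n => Uᵀ * p.2.val * U) l (𝓝 (Uᵀ * H.val * U)) :=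
    (Continuous.tendsto (by fun_prop : Continuous fun A : Sym n => Uᵀ * A.val * U) H).comp hH
  choose P hP using fun p : ℝ × Sym n => exists_mem_eigOrth (X + p.1 • p.2).2
  obtain ⟨W₀, hW₀, hW⟩ := exists_tendsto_ultrafilter_of_mul_transpose_eq_one l
    fun p => transpose_mul_mul_transpose_eq_one hU.1 (hP p).1
  have hdec := fun p : ℝ × Sym n => conj_eigOrth_add_smul hU p.1 p.2.val (hP p)
  choose z hz hKW using exists_tendsto_eigenvalue_quotient ht hK hW hL hW₀ hdec
  have z_antitone : ∀ j k, j ≤ k → eigval X.val j = eigval X.val k → z k ≤ z j :=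
    fun j k hjk hd => by
      refine le_of_tendsto_of_tendsto (hz k) (hz j) ?_
      filter_upwards [ht.eventually self_mem_nhdsWithin] with p hp
      rw [hd]
      exact mul_le_mul_of_nonneg_left (sub_le_sub_right (eigval_antitone _ hjk) _)
        (inv_nonneg.mpr (le_of_lt hp))
  have eigval_block := eigval_blockMat_eq_of_eigenvectors hW₀
    (fun j k hjk => limit_eigenvectors_apply_eq_zero ht₀ hK hW hL hdec hjk)
    (fun j k hjk => hKW k j hjk) z_antitone
  have lambdaDir_eq : lambdaDir X.val U H.val = z := funext fun i =>
    (congrFun (eigval_block i) _).trans (congrArg z (blockEmb_blockIdx X.val i))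
  rw [lambdaDir_eq]
  exact tendsto_pi_nhds.mpr hz

end EigenvalueDirectionalDerivative

section SpectralSubderivative

variable {n : ℕ} {θ : (Fin n → ℝ) → EReal} {X : Sym n} {P U : Matrix (Fin n) (Fin n) ℝ}

/-- The linear map `w ↦ P * Diag w * Pᵀ` from `ℝⁿ` to `Sⁿ`; for orthogonal `P` it parametrises the
symmetric matrices diagonal in the basis of columns of `P`. -/
def conjDiag (P : Matrix (Fin n) (Fin n) ℝ) : (Fin n → ℝ) →ₗ[ℝ] Sym n where
  toFun w := ⟨P * diagonal w * Pᵀ, isSymm_mul_mul_transpose P (isSymm_diagonal w)⟩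
  map_add' w z := Subtype.ext <| by
    change P * diagonal (fun i => w i + z i) * Pᵀ = P * diagonal w * Pᵀ + P * diagonal z * Pᵀ
    rw [← diagonal_add, mul_add, add_mul]
  map_smul' t w := Subtype.ext <| by simp [diagonal_smul]

lemma conjDiag_eigval (hP : P ∈ eigOrth X.val) : conjDiag P (eigval X.val) = X :=
  Subtype.ext hP.2.symm

lemma specFn_conjDiag (hsym : SymmetricFn θ) (hP : P * Pᵀ = 1) (w : Fin n → ℝ) :
    specFn θ (conjDiag P w) = θ w := by
  obtain ⟨τ, hτ⟩ := exists_eigval_conj_diagonal_eq_comp hP w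
  exact (congrArg θ hτ).trans (hsym w τ)

lemma continuous_conjDiag :
    Continuous fun q : Matrix (Fin n) (Fin n) ℝ × (Fin n → ℝ) => conjDiag q.1 q.2 :=
  Continuous.subtype_mk (f := fun q : Matrix (Fin n) (Fin n) ℝ × (Fin n → ℝ) =>
    q.1 * diagonal q.2 * q.1ᵀ) (by fun_prop) _

lemma tendsto_conjDiag_zero {κ : Type*} {l : Filter κ} {P : κ → Matrix (Fin n) (Fin n) ℝ}
    {w : κ → Fin n → ℝ} (hP : ∀ p, P p * (P p)ᵀ = 1) (hw : Tendsto w l (𝓝 0)) :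
    Tendsto (fun p => conjDiag (P p) (w p)) l (𝓝 0) := by
  refine (tendsto_iff_ultrafilter _ _ _).mpr fun u hu => ?_
  obtain ⟨P₀, -, hP₀⟩ := exists_tendsto_ultrafilter_of_mul_transpose_eq_one u hP
  have hlim := (continuous_conjDiag.tendsto' (P₀, 0) 0 (map_zero _)).comp
    (hP₀.prodMk_nhds (hw.mono_left hu))
  exact hlim

lemma subderiv_le_subderiv_specFn (hU : U ∈ eigOrth X.val) (H : Sym n) :
    subderiv θ (eigval X.val) (lambdaDir X.val U H.val) ≤ subderiv (specFn θ) X H := by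
  refine subderiv_le_subderiv_of_tendsto (tendsto_eigval_quotient hU H) rfl fun t ht W => ?_
  rw [smul_inv_smul₀ ht.ne', add_sub_cancel]
  rfl

-- Along `X + t • H`, a perturbation `w` of the eigenvalue direction is realised by the matrix
-- perturbation with the same eigenvectors as `X + t • H`.
lemma subderiv_specFn_le_subderiv (hsym : SymmetricFn θ) (hU : U ∈ eigOrth X.val) (H : Sym n) :
    subderiv (specFn θ) X H ≤ subderiv θ (eigval X.val) (lambdaDir X.val U H.val) := by
  choose P hP using fun t : ℝ => exists_mem_eigOrth (X + t • H).2
  let gap (p : ℝ × (Fin n → ℝ)) : Fin n → ℝ :=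
    p.2 - p.1⁻¹ • (eigval (X + p.1 • H).val - eigval X.val)
  have hgap : Tendsto gap (𝓝[>] 0 ×ˢ 𝓝 (lambdaDir X.val U H.val)) (𝓝 0) := by
    rw [← sub_self (lambdaDir X.val U H.val)]
    exact tendsto_snd.sub
      ((tendsto_eigval_quotient hU H).comp (tendsto_fst.prodMk tendsto_const_nhds))
  have hpert : Tendsto (fun p => H + conjDiag (P p.1) (gap p))
      (𝓝[>] 0 ×ˢ 𝓝 (lambdaDir X.val U H.val)) (𝓝 H) := by
    simpa using (tendsto_conjDiag_zero (fun p => (hP p.1).1) hgap).const_add H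
  refine subderiv_le_subderiv_of_tendsto hpert rfl fun t ht w => ?_
  have hgap_eq : eigval (X + t • H).val + t • gap (t, w) = eigval X.val + t • w := by
    rw [smul_sub, smul_inv_smul₀ ht.ne']
    abel
  have hmat : X + t • (H + conjDiag (P t) (gap (t, w))) =
      conjDiag (P t) (eigval X.val + t • w) := by
    rw [← hgap_eq, map_add, map_smul, conjDiag_eigval (hP t), smul_add, add_assoc]
  rw [hmat, specFn_conjDiag hsym (hP t).1]

theorem subderiv_specFn (hsym : SymmetricFn θ) (hU : U ∈ eigOrth X.val) (H : Sym n) :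
    subderiv (specFn θ) X H = subderiv θ (eigval X.val) (lambdaDir X.val U H.val) :=
  (subderiv_specFn_le_subderiv hsym hU H).antisymm (subderiv_le_subderiv_specFn hU H)

lemma subderiv_specFn_conjDiag_comp_le (hsym : SymmetricFn θ) (hU : U ∈ eigOrth X.val)
    {τ : Equiv.Perm (Fin n)} (hτ : eigval X.val ∘ τ = eigval X.val) (w : Fin n → ℝ) :
    subderiv (specFn θ) X (conjDiag U (w ∘ τ)) ≤ subderiv θ (eigval X.val) w := by
  have hcont : Continuous fun w : Fin n → ℝ => conjDiag U (w ∘ τ) :=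
    continuous_conjDiag.comp (continuous_const.prodMk (by fun_prop))
  refine subderiv_le_subderiv_of_tendsto ((hcont.tendsto w).comp tendsto_snd) rfl fun t _ z => ?_
  have hmat : X + t • conjDiag U (z ∘ τ) = conjDiag U ((eigval X.val + t • z) ∘ τ) := by
    rw [Pi.add_comp, hτ, map_add, conjDiag_eigval hU, Pi.smul_comp, map_smul]
  rw [Function.comp_apply, hmat, specFn_conjDiag hsym hU.1]
  exact hsym _ τ

end SpectralSubderivative

section BlockwiseFan

lemma sum_le_sum_of_fiberwise_le {ι κ M : Type*} [Fintype ι] [DecidableEq κ] [AddCommMonoid M]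
    [PartialOrder M] [IsOrderedAddMonoid M] (d : ι → κ) {f g : ι → M}
    (h : ∀ i, ∑ j with d j = d i, f j ≤ ∑ j with d j = d i, g j) : ∑ i, f i ≤ ∑ i, g i := by
  have hmaps : ∀ i ∈ Finset.univ, d i ∈ Finset.univ.image d := fun i hi =>
    Finset.mem_image_of_mem d hi
  rw [← Finset.sum_fiberwise_of_maps_to hmaps f, ← Finset.sum_fiberwise_of_maps_to hmaps g]
  refine Finset.sum_le_sum fun c hc => ?_
  obtain ⟨i, -, rfl⟩ := Finset.mem_image.mp hc
  exact h i

lemma sum_eq_sum_iff_of_fiberwise_le {ι κ M : Type*} [Fintype ι] [DecidableEq κ]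
    [AddCommMonoid M] [PartialOrder M] [IsOrderedCancelAddMonoid M] (d : ι → κ) {f g : ι → M}
    (h : ∀ i, ∑ j with d j = d i, f j ≤ ∑ j with d j = d i, g j) :
    ∑ i, f i = ∑ i, g i ↔ ∀ i, ∑ j with d j = d i, f j = ∑ j with d j = d i, g j := by
  have hmaps : ∀ i ∈ Finset.univ, d i ∈ Finset.univ.image d := fun i hi =>
    Finset.mem_image_of_mem d hi
  rw [← Finset.sum_fiberwise_of_maps_to hmaps f, ← Finset.sum_fiberwise_of_maps_to hmaps g,
    Finset.sum_eq_sum_iff_of_le (Finset.forall_mem_image.mpr fun i _ => h i)]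
  simp

variable {n : ℕ} (X : Matrix (Fin n) (Fin n) ℝ) (i : Fin n) {y : Fin n → ℝ}
  {σ : Equiv.Perm (Fin n)}

lemma exists_perm_blockEmb_comp (hσ : ∀ i, eigval X (σ i) = eigval X i) :
    ∃ τ : Equiv.Perm (Fin (blockSet X i).card), σ ∘ blockEmb X i = blockEmb X i ∘ τ := by
  let e := ((blockSet X i).orderIsoOfFin rfl).toEquiv
  let s : Equiv.Perm (blockSet X i) :=
    σ.subtypePerm fun j => by rw [mem_blockSet, mem_blockSet, hσ]
  refine ⟨e.symm.permCongr s, funext fun a => ?_⟩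
  change (s (e a) : Fin n) = e (e.symm.permCongr s a)
  rw [Equiv.permCongr_apply, Equiv.apply_symm_apply, Equiv.symm_symm]

lemma eigval_blockMat_diagonal (hσ : ∀ i, eigval X (σ i) = eigval X i)
    (hanti : ∀ i j, i ≤ j → eigval X i = eigval X j → y (σ j) ≤ y (σ i)) :
    eigval (blockMat X (diagonal y) i) = y ∘ σ ∘ blockEmb X i := by
  obtain ⟨τ, hτ⟩ := exists_perm_blockEmb_comp X i hσ
  refine eigval_eq_of_antitone (submatrix_mul_transpose_self_eq_one (P := 1) (by simp) τ)
    (fun a b hab => hanti _ _ ((blockEmb_strictMono X i).monotone hab) ?_) ?_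
  · rw [eigval_blockEmb, eigval_blockEmb]
  · rw [hτ, ← Function.comp_assoc, submatrix_mul_diagonal_comp_mul_transpose, blockMat_diagonal]
    simp [Function.comp_def]

lemma trace_blockMat_diagonal_mul (y : Fin n → ℝ) (M : Matrix (Fin n) (Fin n) ℝ) :
    (blockMat X (diagonal y) i * blockMat X M i).trace =
      ∑ j with eigval X j = eigval X i, y j * M j j := by
  rw [← sum_blockEmb, blockMat_diagonal]
  simp [trace, blockMat]

lemma eigval_blockMat_diagonal_dotProduct (hσ : ∀ i, eigval X (σ i) = eigval X i)
    (hanti : ∀ i j, i ≤ j → eigval X i = eigval X j → y (σ j) ≤ y (σ i))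
    (U H : Matrix (Fin n) (Fin n) ℝ) :
    eigval (blockMat X (diagonal y) i) ⬝ᵥ eigval (blockMat X (Uᵀ * H * U) i) =
      ∑ j with eigval X j = eigval X i, y (σ j) * lambdaDir X U H j := by
  rw [← sum_blockEmb, eigval_blockMat_diagonal X i hσ hanti]
  exact Finset.sum_congr rfl fun a _ => by rw [lambdaDir_blockEmb]; rfl

lemma sum_mul_diag_le_sum_mul_lambdaDir (hσ : ∀ i, eigval X (σ i) = eigval X i)
    (hanti : ∀ i j, i ≤ j → eigval X i = eigval X j → y (σ j) ≤ y (σ i))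
    (U : Matrix (Fin n) (Fin n) ℝ) {H : Matrix (Fin n) (Fin n) ℝ} (hH : H.IsSymm) :
    ∑ j with eigval X j = eigval X i, y j * (Uᵀ * H * U) j j ≤
      ∑ j with eigval X j = eigval X i, y (σ j) * lambdaDir X U H j := by
  rw [← trace_blockMat_diagonal_mul, ← eigval_blockMat_diagonal_dotProduct X i hσ hanti]
  exact trace_mul_le_eigval_dotProduct (isSymm_blockMat X i (isSymm_diagonal y))
    (isSymm_blockMat X i (isSymm_mul_mul_transpose Uᵀ hH))

lemma ipM_eq_sum_mul_diag {U : Matrix (Fin n) (Fin n) ℝ} {Y : Sym n}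
    (hY : Y.val = U * diagonal y * Uᵀ) (H : Sym n) :
    ipM Y H = ∑ i, y i * (Uᵀ * H.val * U) i i := by
  rw [ipM, hY, mul_assoc, mul_assoc, trace_mul_comm, mul_assoc]
  simp [trace]

variable {X}

theorem ipM_le_ipV_lambdaDir {U : Matrix (Fin n) (Fin n) ℝ} {Y : Sym n}
    (hY : Y.val = U * diagonal y * Uᵀ) (hσ : ∀ i, eigval X (σ i) = eigval X i)
    (hanti : ∀ i j, i ≤ j → eigval X i = eigval X j → y (σ j) ≤ y (σ i)) (H : Sym n) :
    ipM Y H ≤ ipV (y ∘ σ) (lambdaDir X U H.val) := by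
  rw [ipM_eq_sum_mul_diag hY]
  exact sum_le_sum_of_fiberwise_le (eigval X) fun i =>
    sum_mul_diag_le_sum_mul_lambdaDir X i hσ hanti U H.2

theorem ipM_eq_ipV_lambdaDir_iff {U : Matrix (Fin n) (Fin n) ℝ} {Y : Sym n}
    (hY : Y.val = U * diagonal y * Uᵀ) (hσ : ∀ i, eigval X (σ i) = eigval X i)
    (hanti : ∀ i j, i ≤ j → eigval X i = eigval X j → y (σ j) ≤ y (σ i)) (H : Sym n) :
    ipM Y H = ipV (y ∘ σ) (lambdaDir X U H.val) ↔
      ∀ i, simOrdSpec (blockMat X (diagonal y) i) (blockMat X (Uᵀ * H.val * U) i) := by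
  rw [ipM_eq_sum_mul_diag hY]
  refine (sum_eq_sum_iff_of_fiberwise_le (eigval X) fun i =>
    sum_mul_diag_le_sum_mul_lambdaDir X i hσ hanti U H.2).trans (forall_congr' fun i => ?_)
  have hsymm : (Uᵀ * H.val * U).IsSymm := isSymm_mul_mul_transpose Uᵀ H.2
  rw [simOrdSpec_iff_trace_mul_eq (isSymm_blockMat X i (isSymm_diagonal y))
      (isSymm_blockMat X i hsymm),
    trace_blockMat_diagonal_mul, eigval_blockMat_diagonal_dotProduct X i hσ hanti]

end BlockwiseFan

section CriticalCone

variable {n : ℕ}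

instance : FirstCountableTopology (Sym n) :=
  have : FirstCountableTopology (Matrix (Fin n) (Fin n) ℝ) :=
    inferInstanceAs (FirstCountableTopology (Fin n → Fin n → ℝ))
  IsInducing.subtypeVal.firstCountableTopology

lemma isContinuousInnerProduct_ipM : IsContinuousInnerProduct (ipM : Sym n → Sym n → ℝ) where
  symm A B := trace_mul_comm A.val B.val
  add_right A B C := by simp [ipM, mul_add]
  smul_right t A B := by simp [ipM]
  self_pos A hA := trace_mul_self_pos A.2 fun h => hA (Subtype.ext h)
  continuous := by unfold ipM; fun_prop

lemma ipM_conjDiag {U : Matrix (Fin n) (Fin n) ℝ} (hU : U * Uᵀ = 1) {Y : Sym n}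
    {y : Fin n → ℝ} (hY : Y.val = U * diagonal y * Uᵀ) (w : Fin n → ℝ) :
    ipM Y (conjDiag U w) = y ⬝ᵥ w := by
  rw [ipM, hY]
  exact trace_conj_diagonal_mul_self hU y w

variable {θ : (Fin n → ℝ) → EReal} {X Y : Sym n} {U : Matrix (Fin n) (Fin n) ℝ}
  {y v : Fin n → ℝ} {σ : Equiv.Perm (Fin n)}

lemma coe_ipV_comp_le_subderiv (hsym : SymmetricFn θ) (hU : U ∈ eigOrth X.val)
    (hYdec : Y.val = U * diagonal y * Uᵀ) (hσ : ∀ i, eigval X.val (σ i) = eigval X.val i)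
    (hY : ∀ W, ((ipM Y W : ℝ) : EReal) ≤ subderiv (specFn θ) X W) (w : Fin n → ℝ) :
    ((ipV (y ∘ σ) w : ℝ) : EReal) ≤ subderiv θ (eigval X.val) w := by
  have hpair : ipM Y (conjDiag U (w ∘ σ.symm)) = ipV (y ∘ σ) w :=
    (ipM_conjDiag hU.1 hYdec _).trans (dotProduct_comp_equiv_symm y w σ)
  have hσsymm : eigval X.val ∘ σ.symm = eigval X.val :=
    (Equiv.comp_symm_eq σ _ _).mpr (funext hσ).symm
  rw [← hpair]
  exact (hY _).trans (subderiv_specFn_conjDiag_comp_le hsym hU hσsymm w)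

theorem critical_cone_spectral_general (hsym : SymmetricFn θ) (hU : U ∈ eigOrth X.val)
    (hYdec : Y.val = U * diagonal y * Uᵀ) (hσ : ∀ i, eigval X.val (σ i) = eigval X.val i)
    (hv : ∀ i, v i = y (σ i))
    (hvdec : ∀ i j, i ≤ j → eigval X.val i = eigval X.val j → v j ≤ v i)
    (hY : ∀ W, ((ipM Y W : ℝ) : EReal) ≤ subderiv (specFn θ) X W) (H : Sym n) :
    H ∈ criticalCone ipM (specFn θ) X Y ↔
      lambdaDir X.val U H.val ∈ criticalCone ipV θ (eigval X.val) v ∧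
        ∀ i, simOrdSpec (diagonal fun a => y (blockEmb X.val i a))
          (blockMat X.val (Uᵀ * H.val * U) i) := by
  obtain rfl : v = y ∘ σ := funext hv
  have hfan := ipM_le_ipV_lambdaDir hYdec hσ hvdec H
  have hdual := coe_ipV_comp_le_subderiv hsym hU hYdec hσ hY (lambdaDir X.val U H.val)
  simp only [← blockMat_diagonal, ← ipM_eq_ipV_lambdaDir_iff hYdec hσ hvdec H]
  change subderiv (specFn θ) X H = _ ↔ subderiv θ (eigval X.val) (lambdaDir X.val U H.val) = _ ∧ _
  rw [subderiv_specFn hsym hU]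
  constructor
  · intro hcrit
    have htight := hfan.antisymm (EReal.coe_le_coe_iff.mp (hdual.trans_eq hcrit))
    exact ⟨htight ▸ hcrit, htight⟩
  · rintro ⟨hcrit, htight⟩
    rw [hcrit, htight]

end CriticalCone

/-- Proposition 3.3: characterization of the critical cone of a spectral
function. -/
theorem critical_cone_spectral {n : ℕ} (θ : (Fin n → ℝ) → EReal)
    (X Y : Sym n) (U : Matrix (Fin n) (Fin n) ℝ) (y v : Fin n → ℝ) (σ : Equiv.Perm (Fin n))
    (hsym : SymmetricFn θ) (hlsc : LowerSemicontinuous (specFn θ))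
    (hY : LimSubgrad ipM (specFn θ) X Y)
    (hU : U ∈ eigOrth X.val)
    (hy : LimSubgrad ipV θ (eigval X.val) y)
    (hYdec : Y.val = U * Matrix.diagonal y * Uᵀ)
    (hσblock : ∀ i, eigval X.val (σ i) = eigval X.val i)
    (hv : ∀ i, v i = y (σ i))
    (hvdec : ∀ i j : Fin n, i ≤ j → eigval X.val i = eigval X.val j → v j ≤ v i)
    (hcase : SubdiffRegularAt ipM (specFn θ) X ∨
      (LocLipAtRelDom ipV θ (eigval X.val) ∧ RegSubgrad ipM (specFn θ) X Y)) :
    ∀ H : Sym n,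
      H ∈ criticalCone ipM (specFn θ) X Y ↔
        (lambdaDir X.val U H.val ∈ criticalCone ipV θ (eigval X.val) v ∧
          ∀ i : Fin n,
            simOrdSpec (Matrix.diagonal fun a => y (blockEmb X.val i a))
              (blockMat X.val (Uᵀ * H.val * U) i)) :=
  critical_cone_spectral_general hsym hU hYdec hσblock hv hvdec <|
    hcase.elim (fun h => h.coe_le_subderiv isContinuousInnerProduct_ipM hY)
      (fun h => h.2.coe_le_subderiv isContinuousInnerProduct_ipM)

end SpecPaper
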